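/- Let Φ ∈ ℝ^{m×n} have restricted isometry constant δ_1 < 1 of order 1 and let y ∈ ℝ^m. Then for every run of OMP applied to (Φ, y) and every integer k ≥ 0 with k + 1 ≤ n, the residuals satisfy ‖r^k‖₂² − ‖r^{k+1}‖₂² ≥ ‖Φᵀ r^k‖_∞² / (1 + δ_1). -/

import Mathlib

noncomputable section
open Finset

/-- `Vec n` is `ℝ^n` with the Euclidean (ℓ²) norm. -/
abbrev Vec (n : ℕ) := EuclideanSpace ℝ (Fin n)

/-- The standard inner product `⟨u, v⟩ = ∑ i, u i * v i`. -/
def dot {n : ℕ} (u v : Vec n) : ℝ := ∑ i, u i * v i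

/-- The `j`-th column of a matrix, as a Euclidean vector. -/
def col {m n : ℕ} (Φ : Matrix (Fin m) (Fin n) ℝ) (j : Fin n) : Vec m :=
  WithLp.toLp 2 fun i => Φ i j

/-- Matrix-vector multiplication `Φ x`, valued in Euclidean space. -/
def mulVec' {m n : ℕ} (Φ : Matrix (Fin m) (Fin n) ℝ) (x : Vec n) : Vec m :=
  WithLp.toLp 2 fun i => ∑ j, Φ i j * x j

/-- The support of a vector, as a `Finset`. -/
def suppF {n : ℕ} (x : Vec n) : Finset (Fin n) :=
  Finset.univ.filter fun i => x i ≠ 0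

/-- Restriction of a vector to an index set (zero outside the set). -/
def restrict {n : ℕ} (x : Vec n) (S : Finset (Fin n)) : Vec n :=
  WithLp.toLp 2 fun i => if i ∈ S then x i else 0

/-- `RIPConst Φ L δ` : δ is the restricted isometry constant of `Φ` of order `L`,
i.e. the smallest `c ≥ 0` such that `(1-c)‖u‖² ≤ ‖Φu‖² ≤ (1+c)‖u‖²` for all
`L`-sparse `u`. -/
def RIPConst {m n : ℕ} (Φ : Matrix (Fin m) (Fin n) ℝ) (L : ℕ) (δ : ℝ) : Prop :=
  IsLeast {c : ℝ | 0 ≤ c ∧ ∀ u : Vec n, (suppF u).card ≤ L →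
    (1 - c) * ‖u‖ ^ 2 ≤ ‖mulVec' Φ u‖ ^ 2 ∧ ‖mulVec' Φ u‖ ^ 2 ≤ (1 + c) * ‖u‖ ^ 2} δ

/-- Signal-to-noise ratio `‖Φx‖²/‖v‖²`. -/
def SNR {m n : ℕ} (Φ : Matrix (Fin m) (Fin n) ℝ) (x : Vec n) (v : Vec m) : ℝ :=
  ‖mulVec' Φ x‖ ^ 2 / ‖v‖ ^ 2

/-- A run of `N` iterations of Orthogonal Matching Pursuit on data `(Φ, y)`:
`idx (k+1) = t^{k+1}` is the index selected at iteration `k+1`, `sets k = T^k`,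
`est k = x^k` and `res k = r^k`. -/
structure OMPRun {m n : ℕ} (Φ : Matrix (Fin m) (Fin n) ℝ) (y : Vec m) (N : ℕ) where
  idx : ℕ → Fin n
  sets : ℕ → Finset (Fin n)
  est : ℕ → Vec n
  res : ℕ → Vec m
  sets_zero : sets 0 = ∅
  est_zero : est 0 = 0
  res_zero : res 0 = y
  idx_not_mem : ∀ k < N, idx (k + 1) ∉ sets k
  idx_max : ∀ k < N, ∀ i : Fin n, i ∉ sets k →
    |dot (col Φ i) (res k)| ≤ |dot (col Φ (idx (k + 1))) (res k)|
  sets_succ : ∀ k < N, sets (k + 1) = insert (idx (k + 1)) (sets k)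
  est_supp : ∀ k < N, suppF (est (k + 1)) ⊆ sets (k + 1)
  est_min : ∀ k < N, ∀ u : Vec n, suppF u ⊆ sets (k + 1) →
    ‖y - mulVec' Φ (est (k + 1))‖ ≤ ‖y - mulVec' Φ u‖
  res_succ : ∀ k < N, res (k + 1) = y - mulVec' Φ (est (k + 1))

/-- The vector `Φᵀ w` restricted to an index set `A` (the vector of correlations
`⟨φ_i, w⟩` for `i ∈ A`, zero outside `A`), as a Euclidean vector. -/
def colDots {m n : ℕ} (Φ : Matrix (Fin m) (Fin n) ℝ) (A : Finset (Fin n)) (w : Vec m) : Vec n :=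
  WithLp.toLp 2 fun i => if i ∈ A then dot (col Φ i) w else 0

/-- The vector `Φᵀ w` of all column correlations, as a plain function (so `‖·‖`
is the sup/ℓ∞ norm). -/
def dualVec {m n : ℕ} (Φ : Matrix (Fin m) (Fin n) ℝ) (w : Vec m) : Fin n → ℝ :=
  fun i => dot (col Φ i) w

/-- `P⊥_S w` : the projection of `w` onto the orthogonal complement of the span
of the columns of `Φ` indexed by `S`. -/
def perpProj {m n : ℕ} (Φ : Matrix (Fin m) (Fin n) ℝ) (S : Finset (Fin n)) (w : Vec m) : Vec m :=
  w - (Submodule.orthogonalProjectionOnto (Submodule.span ℝ (col Φ '' (S : Set (Fin n)))) w : Vec m)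

/-- The `j`-th largest value (1-indexed) among `{|x i| : i ∈ Γ}` (with
multiplicities); `0` if `j > |Γ|` or `j = 0`. -/
def kthLargest {n : ℕ} (x : Vec n) (Γ : Finset (Fin n)) (j : ℕ) : ℝ :=
  if 1 ≤ j ∧ j ≤ Γ.card then
    (Multiset.sort (Γ.val.map fun i => |x i|) (· ≤ ·)).getD (Γ.card - j) 0
  else 0

/-!
The residual `r^{k+1}` is at least as short as every competitor `r^k - t φ_i` with `i ∈ T^{k+1}`,
so the quadratic `t ↦ ‖r^k - t φ_i‖² - ‖r^{k+1}‖²` is nonnegative and its discriminant is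
nonpositive: `⟨φ_i, r^k⟩² ≤ ‖φ_i‖² (‖r^k‖² - ‖r^{k+1}‖²)`. The same inequality with `r^k` in place
of `r^{k+1}` shows that `r^k` is orthogonal to the columns already selected, so the greedy index
`t^{k+1}` maximizes `|⟨φ_i, r^k⟩|` over all columns. Finally, `‖φ_i‖² ≤ 1 + δ_1` because `φ_i` is
the image of a standard basis vector.
-/

theorem sq_inner_le_of_forall_norm_le_norm_sub_smul {E : Type*} [SeminormedAddCommGroup E]
    [InnerProductSpace ℝ E] {φ r s : E} (h : ∀ t : ℝ, ‖s‖ ≤ ‖r - t • φ‖) :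
    inner ℝ φ r ^ 2 ≤ ‖φ‖ ^ 2 * (‖r‖ ^ 2 - ‖s‖ ^ 2) := by
  have quadratic_nonneg (t : ℝ) :
      0 ≤ ‖φ‖ ^ 2 * (t * t) + -2 * inner ℝ φ r * t + (‖r‖ ^ 2 - ‖s‖ ^ 2) :=
    calc 0 ≤ ‖r - t • φ‖ ^ 2 - ‖s‖ ^ 2 := by have := h t; rw [sub_nonneg]; gcongr
      _ = ‖φ‖ ^ 2 * (t * t) + -2 * inner ℝ φ r * t + (‖r‖ ^ 2 - ‖s‖ ^ 2) := by
        rw [norm_sub_sq_real, real_inner_smul_right, real_inner_comm φ r, norm_smul, mul_pow,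
          Real.norm_eq_abs, sq_abs]
        ring
  have hdiscrim := discrim_le_zero quadratic_nonneg
  rw [discrim] at hdiscrim
  linarith

theorem dot_eq_inner {n : ℕ} (u v : Vec n) : dot u v = inner ℝ u v := by
  simp [dot, PiLp.inner_apply, mul_comm]

section Support

variable {n : ℕ} {x : Vec n} {S : Finset (Fin n)} {i : Fin n}

theorem suppF_subset_iff : suppF x ⊆ S ↔ ∀ i ∉ S, x i = 0 := by
  simp only [suppF, Finset.subset_iff, Finset.mem_filter_univ, not_imp_comm]

theorem suppF_single_subset (t : ℝ) : suppF (EuclideanSpace.single i t) ⊆ {i} :=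
  suppF_subset_iff.2 fun j hj => by simp_all

theorem suppF_add_single_subset (hx : suppF x ⊆ S) (hi : i ∈ S) (t : ℝ) :
    suppF (x + EuclideanSpace.single i t) ⊆ S := by
  refine suppF_subset_iff.2 fun j hj => ?_
  have hji : j ≠ i := (ne_of_mem_of_not_mem hi hj).symm
  simp [suppF_subset_iff.1 hx j hj, hji]

end Support

section MulVec

variable {m n : ℕ} (Φ : Matrix (Fin m) (Fin n) ℝ)

theorem mulVec'_eq_toEuclideanLin (x : Vec n) : mulVec' Φ x = Matrix.toEuclideanLin Φ x :=
  rfl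

theorem mulVec'_zero : mulVec' Φ 0 = 0 := by
  rw [mulVec'_eq_toEuclideanLin, map_zero]

theorem mulVec'_add (x z : Vec n) : mulVec' Φ (x + z) = mulVec' Φ x + mulVec' Φ z := by
  simp only [mulVec'_eq_toEuclideanLin, map_add]

theorem mulVec'_single (i : Fin n) (t : ℝ) :
    mulVec' Φ (EuclideanSpace.single i t) = t • col Φ i := by
  ext j
  simp [mulVec', col, mul_comm]

end MulVec

theorem RIPConst.sq_norm_col_le {m n L : ℕ} {Φ : Matrix (Fin m) (Fin n) ℝ} {δ : ℝ}
    (h : RIPConst Φ L δ) (hL : 1 ≤ L) (i : Fin n) : ‖col Φ i‖ ^ 2 ≤ 1 + δ := by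
  have hsparse : (suppF (EuclideanSpace.single i (1 : ℝ))).card ≤ L :=
    (Finset.card_le_card (suppF_single_subset 1)).trans hL
  simpa [mulVec'_single] using (h.1.2 _ hsparse).2

namespace OMPRun

variable {m n N : ℕ} {Φ : Matrix (Fin m) (Fin n) ℝ} {y : Vec m} (run : OMPRun Φ y N) {j k : ℕ}

theorem sets_subset_sets (hjk : j ≤ k) (hk : k ≤ N) : run.sets j ⊆ run.sets k := by
  induction k, hjk using Nat.le_induction with
  | base => exact Finset.Subset.rfl
  | succ k _ ih =>
    rw [run.sets_succ k hk]
    exact (ih (Nat.le_of_succ_le hk)).trans (Finset.subset_insert _ _)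

theorem idx_succ_mem_sets_succ (hk : k < N) : run.idx (k + 1) ∈ run.sets (k + 1) := by
  rw [run.sets_succ k hk]
  exact Finset.mem_insert_self _ _

theorem suppF_est_subset_sets (hjk : j ≤ k) (hk : k ≤ N) : suppF (run.est j) ⊆ run.sets k := by
  refine subset_trans ?_ (run.sets_subset_sets hjk hk)
  cases j with
  | zero => simp [run.est_zero, suppF]
  | succ j => exact run.est_supp j (hjk.trans hk)

theorem res_eq (hk : k ≤ N) : run.res k = y - mulVec' Φ (run.est k) := by
  cases k with
  | zero => rw [run.res_zero, run.est_zero, mulVec'_zero, sub_zero]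
  | succ k => exact run.res_succ k hk

theorem norm_res_le (hk : k ≤ N) {u : Vec n} (hu : suppF u ⊆ run.sets k) :
    ‖run.res k‖ ≤ ‖y - mulVec' Φ u‖ := by
  cases k with
  | zero =>
    have hu_zero : u = 0 := by
      ext i
      exact suppF_subset_iff.1 hu i (by simp [run.sets_zero])
    rw [run.res_zero, hu_zero, mulVec'_zero, sub_zero]
  | succ k =>
    rw [run.res_succ k hk]
    exact run.est_min k hk u hu

theorem norm_res_le_norm_res (hjk : j ≤ k) (hk : k ≤ N) : ‖run.res k‖ ≤ ‖run.res j‖ := by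
  rw [run.res_eq (hjk.trans hk)]
  exact run.norm_res_le hk (run.suppF_est_subset_sets hjk hk)

theorem norm_res_le_norm_res_sub_smul_col (hjk : j ≤ k) (hk : k ≤ N) {i : Fin n}
    (hi : i ∈ run.sets k) (t : ℝ) : ‖run.res k‖ ≤ ‖run.res j - t • col Φ i‖ := by
  rw [run.res_eq (hjk.trans hk), sub_sub, ← mulVec'_single, ← mulVec'_add]
  exact run.norm_res_le hk (suppF_add_single_subset (run.suppF_est_subset_sets hjk hk) hi t)

theorem sq_dot_col_res_le (hjk : j ≤ k) (hk : k ≤ N) {i : Fin n} (hi : i ∈ run.sets k) :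
    dot (col Φ i) (run.res j) ^ 2 ≤
      ‖col Φ i‖ ^ 2 * (‖run.res j‖ ^ 2 - ‖run.res k‖ ^ 2) := by
  rw [dot_eq_inner]
  exact sq_inner_le_of_forall_norm_le_norm_sub_smul
    (run.norm_res_le_norm_res_sub_smul_col hjk hk hi)

theorem dot_col_res_eq_zero (hk : k ≤ N) {i : Fin n} (hi : i ∈ run.sets k) :
    dot (col Φ i) (run.res k) = 0 := by
  have h := run.sq_dot_col_res_le le_rfl hk hi
  rw [sub_self, mul_zero] at h
  exact sq_nonpos_iff _ |>.1 h

theorem norm_dualVec_res (hk : k < N) :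
    ‖dualVec Φ (run.res k)‖ = |dot (col Φ (run.idx (k + 1))) (run.res k)| := by
  refine le_antisymm ((pi_norm_le_iff_of_nonneg (abs_nonneg _)).2 fun i => ?_)
    (norm_le_pi_norm (dualVec Φ (run.res k)) (run.idx (k + 1)))
  by_cases hi : i ∈ run.sets k
  · simp [dualVec, run.dot_col_res_eq_zero hk.le hi]
  · exact run.idx_max k hk i hi

theorem sq_norm_dualVec_res_le (hk : k < N) :
    ‖dualVec Φ (run.res k)‖ ^ 2 ≤
      ‖col Φ (run.idx (k + 1))‖ ^ 2 * (‖run.res k‖ ^ 2 - ‖run.res (k + 1)‖ ^ 2) := by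
  rw [run.norm_dualVec_res hk, sq_abs]
  exact run.sq_dot_col_res_le k.le_succ hk (run.idx_succ_mem_sets_succ hk)

end OMPRun

theorem stmt8_general {m n N : ℕ} {Φ : Matrix (Fin m) (Fin n) ℝ} {y : Vec m}
    (run : OMPRun Φ y N) {k : ℕ} (hk : k < N) {c : ℝ} (hc : 0 < c)
    (hcol : ‖col Φ (run.idx (k + 1))‖ ^ 2 ≤ c) :
    ‖dualVec Φ (run.res k)‖ ^ 2 / c ≤ ‖run.res k‖ ^ 2 - ‖run.res (k + 1)‖ ^ 2 := by
  have hdecrease : 0 ≤ ‖run.res k‖ ^ 2 - ‖run.res (k + 1)‖ ^ 2 :=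
    sub_nonneg.2 (pow_le_pow_left₀ (norm_nonneg _) (run.norm_res_le_norm_res k.le_succ hk) 2)
  rw [div_le_iff₀' hc]
  exact (run.sq_norm_dualVec_res_le hk).trans (mul_le_mul_of_nonneg_right hcol hdecrease)

/-- the residual power difference of OMP satisfies
`‖r^k‖² − ‖r^{k+1}‖² ≥ ‖Φᵀ r^k‖_∞² / (1 + δ₁)`. -/
theorem stmt8 {m n : ℕ} (Φ : Matrix (Fin m) (Fin n) ℝ) (δ1 : ℝ)
    (hRIP : RIPConst Φ 1 δ1) (hδ : δ1 < 1) (y : Vec m)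
    (N : ℕ) (run : OMPRun Φ y N) (k : ℕ) (hk : k + 1 ≤ n) (hkN : k + 1 ≤ N) :
    ‖dualVec Φ (run.res k)‖ ^ 2 / (1 + δ1) ≤
      ‖run.res k‖ ^ 2 - ‖run.res (k + 1)‖ ^ 2 := by
  exact stmt8_general run hkN (by linarith [hRIP.1.1]) (hRIP.sq_norm_col_le le_rfl _)

end
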